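/- Nulling-language equation: for every state s ∈ S, Δ_{s⇝ε} = ⋃_{d=reduce⟨s,p⟩∈D} {d} ∪ ⋃_{d=call⟨s,u,t⟩∈D} Δ_{t⇝ε}·Δ_{u⇝ε}·{d}. -/

import Mathlib

/-!
A run that empties the one-letter stack `s` starts with a `reduce` or a `call`. A `reduce` already
empties the stack, so the run stops there. After `call⟨s,u,t⟩` the stack is `u·t`, and the rest of
the run is a run emptying `u` followed by one emptying `t`: steps rewrite only the top of the stack,
so a run emptying `σ ++ τ` never touches `τ` before `σ` has been consumed (`Reach.split`).
Conversely, a run emptying `σ` can be carried out above any `τ` (`Reach.append_stack`) and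
continued by a run from `τ` (`Reach.trans`). Reversing the sequence of transitions turns the
order `call`, `u`-part, `t`-part into the order of the concatenation in the equation.
-/


/-- Transitions of a recursive transition network over states `S`,
terminal alphabet `A`, and production labels `P`. -/
inductive Tr (S A P : Type) : Type where
  | shift (s : S) (a : A) (t : S)
  | call (s u t : S)
  | reduce (s : S) (p : P)

variable {S A P : Type}

/-- A transition is a shift transition. -/
def Tr.isShift : Tr S A P → Prop
  | .shift _ _ _ => True
  | _ => False

/-- One-step reachability induced by a single transition on configurations (words over `S`). -/
inductive Step : Tr S A P → List S → List S → Prop where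
  | shift (s : S) (a : A) (t : S) (σ : List S) :
      Step (Tr.shift s a t) (s :: σ) (t :: σ)
  | call (s u t : S) (σ : List S) :
      Step (Tr.call s u t) (s :: σ) (u :: t :: σ)
  | reduce (s : S) (p : P) (σ : List S) :
      Step (Tr.reduce s p) (s :: σ) σ

/-- Reachability along a sequence of transitions, all belonging to `D`. -/
inductive Reach (D : Set (Tr S A P)) : List (Tr S A P) → List S → List S → Prop where
  | nil (σ : List S) : Reach D [] σ σ
  | cons {d : Tr S A P} {δ : List (Tr S A P)} {σ σ' σ'' : List S} :
      d ∈ D → Step d σ σ' → Reach D δ σ' σ'' → Reach D (d :: δ) σ σ''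

/-- `η` consists of non-shift transitions (membership in `D` is enforced by `Reach`). -/
def EpsSeq (η : List (Tr S A P)) : Prop := ∀ d ∈ η, ¬ d.isShift

/-- `Δ_{s⇝σ} = {rev η : η ∈ D_ε*, s →_η σ}`. -/
def DeltaRel (D : Set (Tr S A P)) (s : S) (σ : List S) : Set (List (Tr S A P)) :=
  {ρ | ∃ η : List (Tr S A P), EpsSeq η ∧ Reach D η [s] σ ∧ ρ = η.reverse}

theorem Step.append_stack {d : Tr S A P} {σ σ' : List S} (h : Step d σ σ') (τ : List S) :
    Step d (σ ++ τ) (σ' ++ τ) := by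
  cases h <;> constructor

theorem Reach.append_stack {D : Set (Tr S A P)} {δ : List (Tr S A P)} {σ σ' : List S}
    (h : Reach D δ σ σ') (τ : List S) : Reach D δ (σ ++ τ) (σ' ++ τ) := by
  induction h with
  | nil σ => exact .nil _
  | cons hd hs _ ih => exact .cons hd (hs.append_stack τ) ih

theorem Reach.trans {D : Set (Tr S A P)} {δ₁ δ₂ : List (Tr S A P)} {σ σ' σ'' : List S}
    (h₁ : Reach D δ₁ σ σ') (h₂ : Reach D δ₂ σ' σ'') : Reach D (δ₁ ++ δ₂) σ σ'' := by
  induction h₁ with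
  | nil σ => exact h₂
  | cons hd hs _ ih => exact .cons hd hs (ih h₂)

/-- A step from `σ ++ τ` with `σ` nonempty leaves `τ` in place. -/
theorem Step.exists_of_append {d : Tr S A P} {σ τ ρ : List S} (hσ : σ ≠ [])
    (h : Step d (σ ++ τ) ρ) : ∃ σ', Step d σ σ' ∧ ρ = σ' ++ τ := by
  obtain ⟨x, σ, rfl⟩ := List.exists_cons_of_ne_nil hσ
  rw [List.cons_append] at h
  cases h with
  | shift _ a t _ => exact ⟨t :: σ, .shift .., rfl⟩
  | call _ u t _ => exact ⟨u :: t :: σ, .call .., rfl⟩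
  | reduce _ p _ => exact ⟨σ, .reduce .., rfl⟩

/-- A run emptying `σ ++ τ` is a run emptying `σ` followed by a run emptying `τ`; the cut is at
the first moment at which `σ` has been consumed. -/
theorem Reach.split {D : Set (Tr S A P)} {δ : List (Tr S A P)} {σ τ : List S}
    (h : Reach D δ (σ ++ τ) []) :
    ∃ δ₁ δ₂, δ = δ₁ ++ δ₂ ∧ Reach D δ₁ σ [] ∧ Reach D δ₂ τ [] := by
  induction δ generalizing σ with
  | nil =>
    generalize hρ : σ ++ τ = ρ at h
    cases h
    obtain ⟨rfl, rfl⟩ := List.append_eq_nil_iff.mp hρ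
    exact ⟨[], [], rfl, .nil _, .nil _⟩
  | cons d δ ih =>
    by_cases hσ : σ = []
    · subst hσ
      exact ⟨[], d :: δ, rfl, .nil _, h⟩
    · cases h with
      | cons hd hs hr =>
        obtain ⟨σ', hs', rfl⟩ := hs.exists_of_append hσ
        obtain ⟨δ₁, δ₂, rfl, h₁, h₂⟩ := ih hr
        exact ⟨d :: δ₁, δ₂, rfl, .cons hd hs' h₁, h₂⟩

theorem Reach.eq_nil {D : Set (Tr S A P)} {δ : List (Tr S A P)} {σ : List S}
    (h : Reach D δ [] σ) : δ = [] := by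
  cases h with
  | nil => rfl
  | cons _ hs _ => cases hs

/-- **Nulling-language equation:**
`Δ_{s⇝ε} = ⋃_{reduce⟨s,p⟩∈D} {reduce⟨s,p⟩} ∪ ⋃_{call⟨s,u,t⟩∈D} Δ_{t⇝ε}·Δ_{u⇝ε}·{call⟨s,u,t⟩}`. -/
theorem nulling_language_equation
    (S A P : Type) (D : Set (Tr S A P)) (s : S) :
    DeltaRel D s [] =
      {ρ | ∃ p : P, Tr.reduce s p ∈ D ∧ ρ = [Tr.reduce s p]} ∪
      {ρ | ∃ u t : S, Tr.call s u t ∈ D ∧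
        ∃ ρ₁ ∈ DeltaRel D t [], ∃ ρ₂ ∈ DeltaRel D u [],
          ρ = ρ₁ ++ ρ₂ ++ [Tr.call s u t]} := by
  ext ρ
  constructor
  · rintro ⟨η, hη, hr, rfl⟩
    cases hr with
    | cons hd hs hr =>
      cases hs with
      | shift _ a t _ => exact absurd trivial (hη (Tr.shift s a t) (by simp))
      | reduce _ p _ =>
        obtain rfl := hr.eq_nil
        exact Or.inl ⟨p, hd, rfl⟩
      | call _ u t _ =>
        obtain ⟨δ₁, δ₂, rfl, h₁, h₂⟩ := Reach.split (σ := [u]) (τ := [t]) hr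
        refine Or.inr ⟨u, t, hd, δ₂.reverse, ⟨δ₂, fun d h => hη d (by simp [h]), h₂, rfl⟩,
          δ₁.reverse, ⟨δ₁, fun d h => hη d (by simp [h]), h₁, rfl⟩, by simp⟩
  · rintro (⟨p, hd, rfl⟩ | ⟨u, t, hd, _, ⟨δ₂, e₂, h₂, rfl⟩, _, ⟨δ₁, e₁, h₁, rfl⟩, rfl⟩)
    · exact ⟨[Tr.reduce s p], by simp [EpsSeq, Tr.isShift], .cons hd (.reduce ..) (.nil _), rfl⟩
    · refine ⟨Tr.call s u t :: (δ₁ ++ δ₂), ?_,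
        .cons hd (.call ..) ((h₁.append_stack [t]).trans h₂), by simp⟩
      intro d h
      rcases List.mem_cons.mp h with rfl | h
      · exact id
      · exact (List.mem_append.mp h).elim (e₁ d) (e₂ d)
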